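/- arXiv:2303.07753 — 2 statements merged into one kernel-verified Lean document; each statement's English description precedes it below -/
import Mathlib

section
/- Let $\mathcal{C}$ be an abelian category with enough injectives and $X$ an exact, locally nilpotent endofunctor preserving injectives. If $I \in \mathcal{C}$ is injective and $\mathsf{M} \in \operatorname{Mono}(X)$, then $\operatorname{Ext}^i_{\mathcal{C}^{T(X)}}(\mathsf{M}, f_!(I)) = 0$ for all $i > 0$. In particular, $f_!(I)$ is injective in the exact category $\operatorname{Mono}(X)$. -/
open CategoryTheory Limits

universe w v u

variable {C : Type u} [Category.{v} C]

/-- The power `X^n` of an endofunctor, with `X^(n+1) = X^n ⋙ X`. -/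
def fpow (X : C ⥤ C) : ℕ → (C ⥤ C)
  | 0 => 𝟭 C
  | n + 1 => fpow X n ⋙ X

/-- `X` is locally nilpotent if every object is annihilated by some power of `X`. -/
def LocallyNilpotent (X : C ⥤ C) : Prop :=
  ∀ M : C, ∃ n : ℕ, IsZero ((fpow X n).obj M)

/-- The category `(X ⇓ Id)` of `X`-modules, identified with the Eilenberg–Moore category
of the free monad on `X`. -/
structure XMod (X : C ⥤ C) : Type max u v where
  carrier : C
  str : X.obj carrier ⟶ carrier

/-- Morphisms of `X`-modules. -/
@[ext]
structure XModHom {X : C ⥤ C} (M N : XMod X) : Type v where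
  hom : M.carrier ⟶ N.carrier
  comm : M.str ≫ hom = X.map hom ≫ N.str

instance (X : C ⥤ C) : Category (XMod X) where
  Hom := XModHom
  id M := ⟨𝟙 M.carrier, by simp⟩
  comp f g := ⟨f.hom ≫ g.hom, by
    rw [← Category.assoc, f.comm, Category.assoc, g.comm, ← Category.assoc, ← Functor.map_comp]⟩
  id_comp f := by apply XModHom.ext; simp [CategoryStruct.id, CategoryStruct.comp]
  comp_id f := by apply XModHom.ext; simp [CategoryStruct.id, CategoryStruct.comp]
  assoc f g h := by apply XModHom.ext; simp [CategoryStruct.comp]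

@[simp] lemma XMod.id_hom {X : C ⥤ C} (M : XMod X) : (𝟙 M : XModHom M M).hom = 𝟙 M.carrier := rfl
@[simp] lemma XMod.comp_hom {X : C ⥤ C} {M N P : XMod X} (f : M ⟶ N) (g : N ⟶ P) :
    (f ≫ g).hom = f.hom ≫ g.hom := rfl

/-- `F` is the free `X`-module `f₁(N)` on `N`, encoded via the universal
property of the free–forgetful adjunction `f₁ ⊣ f⋆`. -/
structure IsFreeXModOn (X : C ⥤ C) (F : XMod X) (N : C) where
  unit : N ⟶ F.carrier
  lift : ∀ (P : XMod X), (N ⟶ P.carrier) → (F ⟶ P)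
  fac : ∀ (P : XMod X) (g : N ⟶ P.carrier), unit ≫ (lift P g).hom = g
  uniq : ∀ (P : XMod X) (g : N ⟶ P.carrier) (k : F ⟶ P), unit ≫ k.hom = g → k = lift P g

set_option linter.unusedSectionVars false
namespace ExtEff
open CategoryTheory Category Limits DerivedCategory Abelian HomologicalComplex

lemma exists_cover {A : Type u} [Category.{v} A] [Abelian A]
    {P : A} {K : CochainComplex A ℤ} {i : ℤ}
    (π : K ⟶ (single A (ComplexShape.up ℤ) i).obj P) [K.IsStrictlyLE i] [QuasiIsoAt π i] :
    ∃ (P' : A) (α : P' ⟶ P) (_ : Epi α) (σ : (single A (ComplexShape.up ℤ) i).obj P' ⟶ K),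
      σ ≫ π = (single A (ComplexShape.up ℤ) i).map α := by
  let e := K.iCyclesIso i (i + 1) (by simp)
    ((K.isZero_of_isStrictlyLE i (i + 1) (by simp)).eq_of_tgt _ _)
  let α := e.inv ≫ K.homologyπ i ≫ homologyMap π i ≫ (singleObjHomologySelfIso _ _ _).hom
  have : π.f i = α ≫ (singleObjXSelf (ComplexShape.up ℤ) i P).inv := by
    rw [← cancel_epi e.hom]
    dsimp [α, e]
    rw [assoc, assoc, assoc, Iso.hom_inv_id_assoc,
      homologyπ_naturality_assoc]
    rw [homologyπ_singleObjHomologySelfIso_hom_assoc,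
      ← singleObjCyclesSelfIso_inv_iCycles, Iso.hom_inv_id_assoc, cyclesMap_i]
    rfl
  have hd : ∀ k : ℤ, (ComplexShape.up ℤ).Rel i k → 𝟙 (K.X i) ≫ K.d i k = 0 := by
    rintro _ rfl
    apply (K.isZero_of_isStrictlyLE i (i + 1) (by simp)).eq_of_tgt
  refine ⟨K.X i, α, by dsimp [α]; infer_instance, mkHomFromSingle (𝟙 _) hd, ?_⟩
  apply HomologicalComplex.from_single_hom_ext
  rw [comp_f, mkHomFromSingle_f, Category.assoc, this, single_map_f_self, Category.id_comp]

lemma exists_cover_sf {A : Type u} [Category.{v} A] [Abelian A]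
    {P : A} {K : CochainComplex A ℤ} {i : ℤ}
    (π : K ⟶ (CochainComplex.singleFunctor A i).obj P) [K.IsStrictlyLE i] [h : QuasiIsoAt π i] :
    ∃ (P' : A) (α : P' ⟶ P) (_ : Epi α) (σ : (CochainComplex.singleFunctor A i).obj P' ⟶ K),
      σ ≫ π = (CochainComplex.singleFunctor A i).map α :=
  @exists_cover A _ _ P K i π _ h

lemma exists_cover' {A : Type u} [Category.{v} A] [Abelian A] [HasDerivedCategory.{w} A] {P : A}
    {L : CochainComplex A ℤ} {i : ℤ}
    (φ : Q.obj ((CochainComplex.singleFunctor A i).obj P) ⟶ Q.obj L)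
    (n : ℤ) (hn : n < i) [L.IsStrictlyLE n] :
    ∃ (P' : A) (α : P' ⟶ P) (_ : Epi α),
      Q.map ((CochainComplex.singleFunctor A i).map α) ≫ φ = 0 := by
  obtain ⟨K, _, π, h, g, rfl⟩ := right_fac_of_isStrictlyLE φ i
  have h' := h
  rw [isIso_Q_map_iff_quasiIso] at h'
  have h2 : QuasiIsoAt π i := inferInstance
  obtain ⟨P', α, hα, σ, hσ⟩ := exists_cover_sf π
  refine ⟨P', α, hα, ?_⟩
  have h₂ : σ ≫ g = 0 := by
    apply HomologicalComplex.from_single_hom_ext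
    apply (L.isZero_of_isStrictlyLE n i hn).eq_of_tgt
  rw [← hσ, Q.map_comp, assoc, IsIso.hom_inv_id_assoc, ← Q.map_comp, h₂, Q.map_zero]

lemma exists_epi_comp_eq_zero {A : Type u} [Category.{v} A] [Abelian A] [HasExt.{w} A]
    {P Y : A} {n : ℕ} (e : Ext P Y (n + 1)) :
    ∃ (P' : A) (α : P' ⟶ P) (_ : Epi α), (Ext.mk₀ α).comp e (zero_add _) = 0 := by
  let := HasDerivedCategory.standard A
  obtain ⟨P', α, hα, h⟩ := exists_cover' (i := 0)
    (L := (CochainComplex.singleFunctor A (-(n + 1))).obj Y)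
    (e.hom ≫ (((singleFunctors A).shiftIso (n + 1) (-(n + 1)) 0
    (by lia)).hom.app Y)) (-(n+1)) (by lia)
  refine ⟨P', α, hα, ?_⟩
  apply Ext.ext
  simp only [← cancel_mono (((singleFunctors A).shiftIso (n + 1) (-(n + 1)) 0
    (by lia)).hom.app _), Ext.zero_hom, Limits.zero_comp]
  rw [← Ext.singleFunctor_map_comp_hom]
  rw [Category.assoc]
  exact h

end ExtEff

namespace XModAux
open Abelian

variable [Abelian C] {X : C ⥤ C}

lemma hom_ext' {A B : XMod X} {f g : A ⟶ B} (h : XModHom.hom f = XModHom.hom g) : f = g :=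
  XModHom.ext h

/-- Relation between the module and the structure map: a retraction of `F` onto `I ⊞ X F`. -/
lemma lambek (X : C ⥤ C) (I : C) (F : XMod X) (hF : IsFreeXModOn X F I) :
    ∃ (p : F.carrier ⟶ I) (q : F.carrier ⟶ X.obj F.carrier),
      p ≫ hF.unit + q ≫ F.str = 𝟙 F.carrier := by
  let P : XMod X := ⟨I ⊞ X.obj F.carrier, X.map (biprod.desc hF.unit F.str) ≫ biprod.inr⟩
  let k : F ⟶ P := hF.lift P biprod.inl
  let l : P ⟶ F := ⟨biprod.desc hF.unit F.str, by simp [P]⟩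
  have h1 : k ≫ l = 𝟙 F := by
    rw [hF.uniq F hF.unit (𝟙 F) (by simp)]
    apply hF.uniq
    rw [XMod.comp_hom, ← Category.assoc, hF.fac]
    simp [l]
  have h2 : XModHom.hom k ≫ XModHom.hom l = 𝟙 _ := by
    rw [← XMod.comp_hom, h1]; rfl
  refine ⟨k.hom ≫ biprod.fst, k.hom ≫ biprod.snd, ?_⟩
  rw [← h2]
  simp only [Category.assoc, ← Preadditive.comp_add]
  congr 1
  apply biprod.hom_ext' <;> simp [l]

lemma retract [X.Additive] (hXinj : ∀ I : C, Injective I → Injective (X.obj I))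
    (I : C) (hI : Injective I) (F : XMod X) (hF : IsFreeXModOn X F I) (k : ℕ) :
    ∃ (J : C) (_ : Injective J) (a : F.carrier ⟶ J) (b : F.carrier ⟶ (fpow X k).obj F.carrier)
      (c : J ⟶ F.carrier) (d : (fpow X k).obj F.carrier ⟶ F.carrier),
      a ≫ c + b ≫ d = 𝟙 F.carrier := by
  induction k with
  | zero => exact ⟨I, hI, 0, 𝟙 _, hF.unit, 𝟙 _, by
    rw [zero_comp, zero_add]; exact Category.comp_id _⟩
  | succ k ih =>
    obtain ⟨J, hJ, a, b, c, d, h⟩ := ih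
    obtain ⟨p, q, hpq⟩ := lambek X I F hF
    have := hXinj J hJ
    refine ⟨I ⊞ X.obj J, inferInstance, biprod.lift p (q ≫ X.map a), q ≫ X.map b,
      biprod.desc hF.unit (X.map c ≫ F.str), X.map d ≫ F.str, ?_⟩
    have h' : X.map a ≫ X.map c + X.map b ≫ X.map d = 𝟙 _ := by
      rw [← X.map_comp, ← X.map_comp, ← X.map_add, h, X.map_id]
    rw [biprod.lift_desc, ← hpq, add_assoc]
    congr 1
    have h3 := congrArg (fun t => q ≫ t ≫ F.str) h'
    simp only [Preadditive.add_comp, Preadditive.comp_add, Category.id_comp, Category.assoc] at h3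
    rw [Category.assoc, ← h3]
    congr 1
    exact Category.assoc _ _ _

lemma injective_carrier [X.Additive] (hX : LocallyNilpotent X)
    (hXinj : ∀ I : C, Injective I → Injective (X.obj I))
    (I : C) (hI : Injective I) (F : XMod X) (hF : IsFreeXModOn X F I) :
    Injective F.carrier := by
  obtain ⟨N, hN⟩ := hX F.carrier
  obtain ⟨J, hJ, a, b, c, d, h⟩ := retract hXinj I hI F hF N
  rw [hN.eq_of_tgt b 0, zero_comp, add_zero] at h
  refine ⟨fun g f _ => ⟨Injective.factorThru (g ≫ a) f ≫ c, ?_⟩⟩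
  rw [← Category.assoc, Injective.comp_factorThru, Category.assoc, h, Category.comp_id]

/-- iterated structure map -/
def st (F : XMod X) : ∀ k : ℕ, (fpow X k).obj F.carrier ⟶ F.carrier
  | 0 => 𝟙 _
  | k + 1 => X.map (st F k) ≫ F.str

lemma solve_aux [X.Additive] (F M : XMod X) (hM : Mono M.str)
    (hinj : ∀ k, Injective ((fpow X k).obj F.carrier)) (j : ℕ) :
    ∀ (k : ℕ) (_ : IsZero ((fpow X (k + j)).obj F.carrier))
      (ρ : X.obj M.carrier ⟶ (fpow X k).obj F.carrier),
    ∃ φ : M.carrier ⟶ F.carrier, M.str ≫ φ - X.map φ ≫ F.str = ρ ≫ st F k := by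
  induction j with
  | zero =>
    intro k hk ρ
    refine ⟨0, ?_⟩
    rw [hk.eq_of_tgt ρ 0]
    simp
  | succ j ih =>
    intro k hk ρ
    have := hinj k
    let χ := Injective.factorThru ρ M.str
    have hχ : M.str ≫ χ = ρ := Injective.comp_factorThru _ _
    obtain ⟨φ, hφ⟩ := ih (k + 1) (by rwa [Nat.add_right_comm]) (X.map χ)
    refine ⟨χ ≫ st F k + φ, ?_⟩
    have hφ : M.str ≫ φ - X.map φ ≫ F.str = X.map χ ≫ X.map (st F k) ≫ F.str := hφ
    have e : M.str ≫ φ = X.map χ ≫ X.map (st F k) ≫ F.str + X.map φ ≫ F.str :=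
      sub_eq_iff_eq_add.1 hφ
    have e2 : M.str ≫ χ ≫ st F k = ρ ≫ st F k := by rw [← hχ, Category.assoc]
    rw [Preadditive.comp_add, e2, e, X.map_add, X.map_comp, Preadditive.add_comp, Category.assoc]
    abel

lemma solve [X.Additive] (hX : LocallyNilpotent X)
    (hXinj : ∀ I : C, Injective I → Injective (X.obj I)) (F M : XMod X) (hM : Mono M.str)
    (hinj : Injective F.carrier) (ψ : X.obj M.carrier ⟶ F.carrier) :
    ∃ φ : M.carrier ⟶ F.carrier, M.str ≫ φ - X.map φ ≫ F.str = ψ := by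
  obtain ⟨N, hN⟩ := hX F.carrier
  have h : ∀ k, Injective ((fpow X k).obj F.carrier) := by
    intro k
    induction k with
    | zero => exact hinj
    | succ k ih => exact hXinj _ ih
  obtain ⟨φ, hφ⟩ := solve_aux F M hM h N 0 (by rwa [Nat.zero_add]) ψ
  exact ⟨φ, hφ.trans (Category.comp_id _)⟩

lemma fpow_succ_obj (X : C ⥤ C) (n : ℕ) (N : C) :
    (fpow X (n + 1)).obj N = (fpow X n).obj (X.obj N) := by
  induction n with
  | zero => rfl
  | succ n ih => exact congrArg X.obj ih

lemma free_cover [X.Additive] (n : ℕ) : ∀ (N : C) (_ : IsZero ((fpow X n).obj N)),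
    ∃ (P : XMod X) (u : N ⟶ P.carrier), Mono (biprod.desc u P.str) ∧
      ∀ (Y : XMod X) (g : N ⟶ Y.carrier), ∃ k : P ⟶ Y, u ≫ XModHom.hom k = g := by
  induction n with
  | zero =>
    intro N hN
    have hN : IsZero N := hN
    have hXN : IsZero (X.obj N) := X.map_isZero hN
    refine ⟨⟨N, 0⟩, 𝟙 N, ?_, fun Y g => ⟨⟨0, hXN.eq_of_src _ _⟩, hN.eq_of_src _ _⟩⟩
    apply Preadditive.mono_of_cancel_zero
    intro G f _
    apply biprod.hom_ext
    · exact hN.eq_of_tgt _ _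
    · exact hXN.eq_of_tgt _ _
  | succ n ih =>
    intro N hN
    rw [fpow_succ_obj] at hN
    obtain ⟨Q, u, hu, hlift⟩ := ih _ hN
    let t : X.obj (N ⊞ Q.carrier) ⟶ Q.carrier :=
      X.map biprod.fst ≫ u + X.map biprod.snd ≫ Q.str
    have ht : ∀ {G : C} (f : G ⟶ X.obj (N ⊞ Q.carrier)), f ≫ t = 0 → f = 0 := by
      intro G f hf
      have h1 : biprod.lift (f ≫ X.map biprod.fst) (f ≫ X.map biprod.snd) = 0 := by
        rw [← cancel_mono (biprod.desc u Q.str), biprod.lift_desc, zero_comp, ← hf]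
        simp [t]
      have h2 : f ≫ X.map biprod.fst = 0 := by
        have := h1 =≫ biprod.fst
        simpa using this
      have h3 : f ≫ X.map biprod.snd = 0 := by
        have := h1 =≫ biprod.snd
        simpa using this
      have h4 : f ≫ X.map (biprod.fst ≫ biprod.inl + biprod.snd ≫ biprod.inr) = 0 := by
        rw [X.map_add, X.map_comp, X.map_comp, Preadditive.comp_add, reassoc_of% h2,
          reassoc_of% h3]
        simp
      rwa [biprod.total, X.map_id, Category.comp_id] at h4
    refine ⟨⟨N ⊞ Q.carrier, t ≫ biprod.inr⟩, biprod.inl, ?_, ?_⟩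
    · apply Preadditive.mono_of_cancel_zero
      intro G f hf
      apply biprod.hom_ext
      · have := hf =≫ biprod.fst
        rw [biprod.desc_eq] at this
        simpa using this
      · rw [zero_comp]
        apply ht
        have := hf =≫ biprod.snd
        rw [biprod.desc_eq] at this
        simpa using this
    · intro Y g
      obtain ⟨k, hk⟩ := hlift Y (X.map g ≫ Y.str)
      have hc : Q.str ≫ XModHom.hom k = X.map (XModHom.hom k) ≫ Y.str := XModHom.comm k
      refine ⟨⟨biprod.desc g (XModHom.hom k), ?_⟩, by simp⟩
      simp only [t, Category.assoc, biprod.inr_desc, Preadditive.add_comp, hk, hc]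
      rw [biprod.desc_eq, X.map_add, X.map_comp, X.map_comp, Preadditive.add_comp]
      simp

variable [PreservesFiniteLimits X] [PreservesFiniteColimits X]

lemma additive : X.Additive := by
  have := preservesBinaryBiproducts_of_preservesBinaryProducts X
  exact Functor.additive_of_preservesBinaryBiproducts X

lemma exact_desc {A B D Z : C} (f : A ⟶ B) (g : B ⟶ D) (w : f ≫ g = 0)
    (h : (ShortComplex.mk f g w).Exact) (hg : Epi g) (k : X.obj B ⟶ Z) (hk : X.map f ≫ k = 0) :
    ∃ d : X.obj D ⟶ Z, X.map g ≫ d = k := by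
  have := additive (X := X)
  have hS' := h.map X
  have : Epi ((ShortComplex.mk f g w).map X).g := by
    change Epi (X.map g)
    infer_instance
  exact ⟨hS'.desc k hk, hS'.g_desc k hk⟩

lemma epi_hom {A B : XMod X} (f : A ⟶ B) [Epi f] : Epi (XModHom.hom f) := by
  have hc : A.str ≫ XModHom.hom f = X.map (XModHom.hom f) ≫ B.str := XModHom.comm f
  obtain ⟨s, hs⟩ := exact_desc (X := X) (XModHom.hom f) (cokernel.π (XModHom.hom f)) (by simp)
    (ShortComplex.exact_of_g_is_cokernel _ (cokernelIsCokernel _)) inferInstance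
    (B.str ≫ cokernel.π (XModHom.hom f)) (by
      rw [← Category.assoc, ← hc, Category.assoc, cokernel.condition, comp_zero])
  have := additive (X := X)
  let D : XMod X := ⟨cokernel (XModHom.hom f), s⟩
  let a : B ⟶ D := ⟨cokernel.π (XModHom.hom f), hs.symm⟩
  let b : B ⟶ D := ⟨0, by simp⟩
  have hab : a = b := by
    rw [← cancel_epi f]
    apply hom_ext'
    exact (cokernel.condition _).trans comp_zero.symm
  apply Abelian.epi_of_cokernel_π_eq_zero
  exact congrArg XModHom.hom hab

lemma split_epi {P A : XMod X} (f : P ⟶ A) (u : A.carrier ⟶ P.carrier)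
    (h : u ≫ XModHom.hom f = 𝟙 _) : Epi f := by
  refine ⟨fun a b hab => hom_ext' ?_⟩
  have := congrArg (fun t => u ≫ XModHom.hom t) hab
  simpa [reassoc_of% h] using this

/-- `i : K ⟶ P` is a kernel of `p` after forgetting the module structure. -/
structure IsKer {K P M : XMod X} (i : K ⟶ P) (p : P ⟶ M) : Prop where
  mono : Mono (XModHom.hom i)
  w : XModHom.hom i ≫ XModHom.hom p = 0
  lift : ∀ {T : C} (k : T ⟶ P.carrier), k ≫ XModHom.hom p = 0 → ∃ l, l ≫ XModHom.hom i = k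

lemma exists_ker {P M : XMod X} (p : P ⟶ M) : ∃ (K : XMod X) (i : K ⟶ P), IsKer i p := by
  have hc : P.str ≫ XModHom.hom p = X.map (XModHom.hom p) ≫ M.str := XModHom.comm p
  have := additive (X := X)
  have w : (X.map (kernel.ι (XModHom.hom p)) ≫ P.str) ≫ XModHom.hom p = 0 := by
    rw [Category.assoc, hc, ← Category.assoc, ← X.map_comp, kernel.condition]
    simp
  refine ⟨⟨kernel (XModHom.hom p), kernel.lift _ _ w⟩,
    ⟨kernel.ι (XModHom.hom p), kernel.lift_ι _ _ w⟩, ?_, ?_, ?_⟩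
  · exact inferInstanceAs (Mono (kernel.ι (XModHom.hom p)))
  · exact kernel.condition _
  · intro T k hk
    exact ⟨kernel.lift _ k hk, kernel.lift_ι _ _ _⟩

lemma ker_mono {K P M : XMod X} {i : K ⟶ P} {p : P ⟶ M} (hi : IsKer i p) (hP : Mono P.str) :
    Mono K.str := by
  have h : K.str ≫ XModHom.hom i = X.map (XModHom.hom i) ≫ P.str := XModHom.comm i
  have := hi.mono
  have : Mono (K.str ≫ XModHom.hom i) := by
    rw [h]; infer_instance
  exact mono_of_mono _ (XModHom.hom i)

lemma zero_hom' [Abelian (XMod X)] {A B : XMod X} : XModHom.hom (0 : A ⟶ B) = 0 := by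
  have := additive (X := X)
  let z : A ⟶ B := ⟨0, by simp⟩
  have : (0 : A ⟶ A) ≫ z = 0 := zero_comp
  rw [← this, XMod.comp_hom]
  exact comp_zero

lemma ker_comp [Abelian (XMod X)] {K P M : XMod X} {i : K ⟶ P} {p : P ⟶ M} (hi : IsKer i p) :
    i ≫ p = 0 := by
  apply hom_ext'
  rw [zero_hom', XMod.comp_hom, hi.w]

lemma ker_lift {K P M T : XMod X} {i : K ⟶ P} {p : P ⟶ M} (hi : IsKer i p)
    (k : T ⟶ P) (hk' : XModHom.hom k ≫ XModHom.hom p = 0) : ∃ l : T ⟶ K, l ≫ i = k := by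
  have hc : T.str ≫ XModHom.hom k = X.map (XModHom.hom k) ≫ P.str := XModHom.comm k
  have h : K.str ≫ XModHom.hom i = X.map (XModHom.hom i) ≫ P.str := XModHom.comm i
  obtain ⟨l, hl⟩ := hi.lift _ hk'
  have := hi.mono
  refine ⟨⟨l, ?_⟩, hom_ext' hl⟩
  apply (cancel_mono (XModHom.hom i)).1
  rw [Category.assoc, Category.assoc, h, hl, ← Category.assoc, ← X.map_comp, hl, hc]

lemma ker_shortExact [Abelian (XMod X)] {K P M : XMod X} {i : K ⟶ P} {p : P ⟶ M}
    (hi : IsKer i p) [Epi p] :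
    (ShortComplex.mk i p (ker_comp hi)).ShortExact := by
  have := hi.mono
  have hm : Mono i := by
    refine ⟨fun a b hab => hom_ext' ?_⟩
    have := congrArg XModHom.hom hab
    rwa [XMod.comp_hom, XMod.comp_hom, cancel_mono] at this
  have hl : IsLimit (KernelFork.ofι i (ker_comp hi)) := by
    refine KernelFork.IsLimit.ofι' _ _ fun {T} k hk => ?_
    have hk' : XModHom.hom k ≫ XModHom.hom p = 0 := by
      rw [← XMod.comp_hom]
      exact (congrArg XModHom.hom hk).trans zero_hom'
    exact ⟨_, (ker_lift hi k hk').choose_spec⟩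
  exact ShortComplex.ShortExact.mk' (ShortComplex.exact_of_f_is_kernel _ hl) hm ‹_›

lemma extend (hX : LocallyNilpotent X)
    (hXinj : ∀ I : C, Injective I → Injective (X.obj I)) (F M K P : XMod X) (hM : Mono M.str)
    (hinj : Injective F.carrier) (i : K ⟶ P) (p : P ⟶ M) (hi : IsKer i p) [Epi p] (g : K ⟶ F) :
    ∃ h : P ⟶ F, i ≫ h = g := by
  have := additive (X := X)
  have hep := epi_hom p
  have := hi.mono
  have hl : IsLimit (KernelFork.ofι (XModHom.hom i) hi.w) :=
    KernelFork.IsLimit.ofι' _ _ fun {T} k hk => ⟨_, (hi.lift k hk).choose_spec⟩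
  let h := Injective.factorThru (XModHom.hom g) (XModHom.hom i)
  have hh : XModHom.hom i ≫ h = XModHom.hom g := Injective.comp_factorThru _ _
  have hcg : K.str ≫ XModHom.hom g = X.map (XModHom.hom g) ≫ F.str := XModHom.comm g
  have hci : K.str ≫ XModHom.hom i = X.map (XModHom.hom i) ≫ P.str := XModHom.comm i
  have hcp : P.str ≫ XModHom.hom p = X.map (XModHom.hom p) ≫ M.str := XModHom.comm p
  have w : X.map (XModHom.hom i) ≫ (P.str ≫ h - X.map h ≫ F.str) = 0 := by
    rw [Preadditive.comp_sub, ← Category.assoc, ← hci, Category.assoc, hh, hcg,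
      ← Category.assoc, ← X.map_comp, hh, sub_self]
  obtain ⟨ψ, hd⟩ := exact_desc (X := X) _ _ hi.w (ShortComplex.exact_of_f_is_kernel _ hl) hep _ w
  obtain ⟨φ, hφ⟩ := solve hX hXinj F M hM hinj ψ
  rw [← hφ, Preadditive.comp_sub, ← Category.assoc, ← hcp, Category.assoc, ← Category.assoc
    (X.map _), ← X.map_comp] at hd
  refine ⟨⟨h - XModHom.hom p ≫ φ, ?_⟩, ?_⟩
  · rw [Preadditive.comp_sub, X.map_sub, Preadditive.sub_comp]
    rw [sub_eq_sub_iff_add_eq_add] at hd ⊢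
    rw [← hd, add_comm]
  · apply hom_ext'
    rw [XMod.comp_hom]
    change XModHom.hom i ≫ (h - _) = _
    rw [Preadditive.comp_sub, hh, ← Category.assoc, hi.w, zero_comp, sub_zero]

theorem main [X.Additive] (hX : LocallyNilpotent X)
    (hXinj : ∀ I : C, Injective I → Injective (X.obj I))
    [Abelian (XMod X)] [HasExt.{w} (XMod X)]
    (F : XMod X) (hF : Injective F.carrier) (n : ℕ) :
    ∀ (M : XMod X) (_ : Mono M.str) (e : Ext M F (n + 1)), e = 0 := by
  induction n with
  | zero =>
    intro M hM e
    obtain ⟨A, α, hα, hz⟩ := ExtEff.exists_epi_comp_eq_zero e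
    obtain ⟨N, hN⟩ := hX A.carrier
    obtain ⟨P, u, hP, hlift⟩ := free_cover N A.carrier hN
    obtain ⟨k, hk⟩ := hlift A (𝟙 _)
    have hek : Epi k := split_epi k u hk
    obtain ⟨K, i, hi⟩ := exists_ker (k ≫ α)
    have hS := ker_shortExact hi
    obtain ⟨y, hy⟩ := Ext.contravariant_sequence_exact₃ hS F e (by
      dsimp
      rw [← Ext.mk₀_comp_mk₀_assoc, hz, Ext.comp_zero]) (n₀ := 0) (by lia)
    obtain ⟨g, rfl⟩ := Ext.mk₀_bijective _ _ |>.2 y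
    obtain ⟨h, rfl⟩ := extend hX hXinj F M K P hM hF i (k ≫ α) hi g
    rw [← hy, ← Ext.mk₀_comp_mk₀]
    exact hS.extClass_comp_assoc _
  | succ n ih =>
    intro M hM e
    obtain ⟨A, α, hα, hz⟩ := ExtEff.exists_epi_comp_eq_zero e
    obtain ⟨N, hN⟩ := hX A.carrier
    obtain ⟨P, u, hP, hlift⟩ := free_cover N A.carrier hN
    obtain ⟨k, hk⟩ := hlift A (𝟙 _)
    have hek : Epi k := split_epi k u hk
    obtain ⟨K, i, hi⟩ := exists_ker (k ≫ α)
    have hS := ker_shortExact hi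
    obtain ⟨y, hy⟩ := Ext.contravariant_sequence_exact₃ hS F e (by
      dsimp
      rw [← Ext.mk₀_comp_mk₀_assoc, hz, Ext.comp_zero]) (n₀ := n + 1) (by lia)
    have hPs : Mono P.str := by
      have : P.str = biprod.inr ≫ biprod.desc u P.str := by simp
      rw [this]; infer_instance
    rw [← hy, ih _ (ker_mono hi hPs) y, Ext.comp_zero]

end XModAux

/-- Let `C` be abelian with enough injectives and `X` exact, locally
nilpotent and preserving injectives. If `I` is injective in `C` and `M ∈ Mono(X)`, then
`Ext^i(M, f₁(I)) = 0` for all `i > 0` in the Eilenberg–Moore category of the free monad.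
In particular, `f₁(I)` is injective in the exact category `Mono(X)`. -/
theorem ext_vanishing_into_free_on_injective
    [Abelian C] [EnoughInjectives C] {X : C ⥤ C}
    [PreservesFiniteLimits X] [PreservesFiniteColimits X]
    (hX : LocallyNilpotent X)
    (hXinj : ∀ I : C, Injective I → Injective (X.obj I))
    [Abelian (XMod X)] [HasExt.{w} (XMod X)]
    (I : C) (hI : Injective I) (F : XMod X) (hF : IsFreeXModOn X F I)
    (M : XMod X) (hM : Mono M.str) :
    ∀ i : ℕ, 0 < i → Subsingleton (Abelian.Ext M F i) := by
  intro i hi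
  have : X.Additive := XModAux.additive
  obtain ⟨n, rfl⟩ := Nat.exists_eq_succ_of_ne_zero hi.ne'
  exact subsingleton_of_forall_eq 0 (XModAux.main hX hXinj F
    (XModAux.injective_carrier hX hXinj I hI F hF) n M hM)
end

section
/- Let $\mathcal{C}$ be an abelian category with enough injectives and $X$ an exact, locally nilpotent endofunctor preserving injectives. Let $g\colon \mathsf{M} \to f_!(I)$ be a morphism in $\operatorname{Mono}(X)$ with $I$ injective in $\mathcal{C}$. Then $g$ is an injective envelope in the exact category $\operatorname{Mono}(X)$ if and only if $\operatorname{Kopf}_X(g)\colon \operatorname{Kopf}_X(\mathsf{M}) \to I$ is an injective envelope in $\mathcal{C}$. Consequently, if $\mathcal{C}$ has injective envelopes, so does $\operatorname{Mono}(X)$. -/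
open CategoryTheory Limits

universe v u

variable {C : Type u} [Category.{v} C]

variable [Abelian C] {X : C ⥤ C}

/-- A conflation in `Mono(X)`: a kernel-cokernel pair (detected on underlying objects). -/
def IsConf {A B D : XMod X} (f : A ⟶ B) (g : B ⟶ D) : Prop :=
  Mono f.hom ∧ Epi g.hom ∧
    ∃ w : f.hom ≫ g.hom = 0, (ShortComplex.mk f.hom g.hom w).Exact

/-- An inflation in the exact category `Mono(X)`: a monomorphism whose cokernel again lies
in `Mono(X)`. -/
def IsInflationMono {A B : XMod X} (f : A ⟶ B) : Prop :=
  ∃ (D : XMod X) (g : B ⟶ D), Mono D.str ∧ IsConf f g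

/-- The induced map `Kopf_X(g) : coker h_M ⟶ coker h_N` on tops. -/
noncomputable def kopfMap {M N : XMod X} (g : M ⟶ N) :
    cokernel M.str ⟶ cokernel N.str :=
  cokernel.map M.str N.str (X.map g.hom) g.hom g.comm

section Helpers

lemma fpow_obj_comm (X : C ⥤ C) (n : ℕ) (Y : C) :
    (fpow X n).obj (X.obj Y) = X.obj ((fpow X n).obj Y) := by
  induction n with
  | zero => rfl
  | succ k ih =>
    change X.obj ((fpow X k).obj (X.obj Y)) = X.obj (X.obj ((fpow X k).obj Y))
    rw [ih]

lemma isZero_fpow_succ {X : C ⥤ C} {n : ℕ} {Y : C} (h : IsZero ((fpow X (n + 1)).obj Y)) :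
    IsZero ((fpow X n).obj (X.obj Y)) := by
  rw [fpow_obj_comm]; exact h

lemma isZero_of_mono_fpow [PreservesFiniteLimits X] (n : ℕ) :
    ∀ (K : C) (m : K ⟶ X.obj K), Mono m → IsZero ((fpow X n).obj K) → IsZero K := by
  induction n with
  | zero => intro K m _ h; exact h
  | succ k ih =>
    intro K m hm h
    have := ih (X.obj K) (X.map m) inferInstance (isZero_fpow_succ h)
    exact IsZero.of_mono m this

lemma isZero_of_epi_fpow [PreservesFiniteColimits X] (n : ℕ) :
    ∀ (K : C) (m : X.obj K ⟶ K), Epi m → IsZero ((fpow X n).obj K) → IsZero K := by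
  induction n with
  | zero => intro K m _ h; exact h
  | succ k ih =>
    intro K m hm h
    have := ih (X.obj K) (X.map m) inferInstance (isZero_fpow_succ h)
    exact IsZero.of_epi m this

lemma additive_of_exact (X : C ⥤ C) [PreservesFiniteLimits X] : X.Additive :=
  Functor.additive_of_preserves_binary_products X

/-- the key extension property of an inflation -/
def ExtProp {A : C} (B : XMod X) (g : A ⟶ B.carrier) : Prop :=
  ∀ (Y : C), Injective Y → ∀ v : X.obj B.carrier ⟶ Y, X.map g ≫ v = 0 →
    ∃ d : B.carrier ⟶ Y, g ≫ d = 0 ∧ B.str ≫ d = v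

lemma extProp_of_inflation [PreservesFiniteLimits X] [PreservesFiniteColimits X]
    {M B : XMod X} (g : M ⟶ B) (hg : IsInflationMono g) : ExtProp B g.hom := by
  have := additive_of_exact X
  obtain ⟨D, q, hD, hm, he, w, hex⟩ := hg
  intro Y hY v hv
  have hex' := hex.map X
  have : Epi ((ShortComplex.mk g.hom q.hom w).map X).g := by
    change Epi (X.map q.hom); infer_instance
  let w1 : X.obj D.carrier ⟶ Y := hex'.desc v hv
  have hw1 : X.map q.hom ≫ w1 = v := hex'.g_desc v hv
  refine ⟨q.hom ≫ Injective.factorThru w1 D.str, ?_, ?_⟩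
  · rw [← Category.assoc, w, zero_comp]
  · rw [← Category.assoc, q.comm, Category.assoc, Injective.comp_factorThru, hw1]

lemma extProp_zero (B : XMod X) [Mono B.str] : ExtProp B (0 : B.carrier ⟶ B.carrier) := by
  intro Y hY v _
  exact ⟨Injective.factorThru v B.str, by simp, by simp⟩

lemma lemmaA [X.Additive] (hXinj : ∀ I : C, Injective I → Injective (X.obj I))
    {A : C} (B P : XMod X) (g : A ⟶ B.carrier) (hg : ExtProp B g) (n : ℕ) :
    ∀ (Y : C), Injective Y → IsZero ((fpow X n).obj Y) → ∀ (s : Y ⟶ P.carrier)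
      (v : X.obj B.carrier ⟶ Y), X.map g ≫ v = 0 →
      ∃ d : B.carrier ⟶ P.carrier, g ≫ d = 0 ∧ B.str ≫ d - X.map d ≫ P.str = v ≫ s := by
  induction n with
  | zero =>
    intro Y _ h s v _
    have h : IsZero Y := h
    refine ⟨0, by simp, ?_⟩
    rw [h.eq_of_src s 0]; simp
  | succ k ih =>
    intro Y hY h s v hv
    obtain ⟨d, hd, hd'⟩ := hg Y hY v hv
    obtain ⟨e, he, he'⟩ := ih (X.obj Y) (hXinj Y hY) (isZero_fpow_succ h) (X.map s ≫ P.str)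
      (X.map d) (by rw [← X.map_comp, hd, X.map_zero])
    refine ⟨d ≫ s + e, ?_, ?_⟩
    · rw [Preadditive.comp_add, he, ← Category.assoc, hd]; simp
    · rw [sub_eq_iff_eq_add] at he'
      simp only [Preadditive.comp_add, Functor.map_add, Preadditive.add_comp, Functor.map_comp,
        he', Category.assoc, reassoc_of% hd']
      abel

@[simp]
lemma pi_kopfMap {M N : XMod X} (g : M ⟶ N) :
    cokernel.π M.str ≫ kopfMap g = g.hom ≫ cokernel.π N.str := by
  simp [kopfMap]

lemma lemmaB [PreservesFiniteLimits X] (hX : LocallyNilpotent X)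
    (hXinj : ∀ I : C, Injective I → Injective (X.obj I))
    {A : C} (B F : XMod X) (g : A ⟶ B.carrier) (hg : ExtProp B g)
    (hF : Injective F.carrier) (ρ : F.carrier ⟶ X.obj F.carrier) (hρ : F.str ≫ ρ = 𝟙 _)
    (e₀ : B.carrier ⟶ F.carrier) (τ : cokernel B.str ⟶ cokernel F.str)
    (hτ : e₀ ≫ cokernel.π F.str = cokernel.π B.str ≫ τ)
    (hge : X.map g ≫ (B.str ≫ e₀ - X.map e₀ ≫ F.str) = 0) :
    ∃ e : B ⟶ F, g ≫ e.hom = g ≫ e₀ ∧ kopfMap e = τ := by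
  have := additive_of_exact X
  have hm : Mono F.str := mono_of_mono_fac hρ
  obtain ⟨n, hn⟩ := hX (X.obj F.carrier)
  let r := B.str ≫ e₀ - X.map e₀ ≫ F.str
  have hr : r ≫ cokernel.π F.str = 0 := by simp [r, hτ]
  let v := Abelian.monoLift F.str r hr
  have hv : v ≫ F.str = r := Abelian.monoLift_comp F.str r hr
  obtain ⟨d, hd, hd'⟩ := lemmaA hXinj B ⟨X.obj F.carrier, X.map F.str⟩ g hg n
    (X.obj F.carrier) (hXinj _ hF) hn (𝟙 _) v (by
      rw [← cancel_mono F.str, Category.assoc, hv, zero_comp]; exact hge)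
  dsimp only at d hd hd'
  refine ⟨⟨e₀ - d ≫ F.str, ?_⟩, ?_, ?_⟩
  · have h2 : B.str ≫ d ≫ F.str - X.map d ≫ X.map F.str ≫ F.str = r := by
      rw [← hv, ← Category.comp_id v, ← hd']; simp
    have h3 : B.str ≫ e₀ - X.map e₀ ≫ F.str = r := rfl
    simp only [Preadditive.comp_sub, Functor.map_sub, Preadditive.sub_comp, Functor.map_comp,
      Category.assoc]
    rw [sub_eq_sub_iff_add_eq_add]
    rw [sub_eq_iff_eq_add] at h2 h3
    rw [h2, h3]; abel
  · simp [Preadditive.comp_sub, reassoc_of% hd]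
  · rw [← cancel_epi (cokernel.π B.str), pi_kopfMap]
    simp [hτ]

lemma mono_of_factor_injective [EnoughInjectives C] {A B : C} (f : A ⟶ B)
    (h : ∀ (E : C), Injective E → ∀ u : A ⟶ E, ∃ w : B ⟶ E, f ≫ w = u) : Mono f := by
  obtain ⟨w, hw⟩ := h (Injective.under A) inferInstance (Injective.ι A)
  exact mono_of_mono_fac hw

lemma mono_kopf_of_ext [EnoughInjectives C] [PreservesFiniteLimits X] {M N : XMod X}
    (g : M ⟶ N) (hg : Mono g.hom) (H : ExtProp N g.hom) : Mono (kopfMap g) := by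
  have := additive_of_exact X
  apply mono_of_factor_injective
  intro E hE u
  let w₀ : N.carrier ⟶ E := Injective.factorThru (cokernel.π M.str ≫ u) g.hom
  have hw₀ : g.hom ≫ w₀ = cokernel.π M.str ≫ u := Injective.comp_factorThru _ _
  obtain ⟨d, hd, hd'⟩ := H E hE (N.str ≫ w₀) (by
    rw [← Category.assoc, ← g.comm, Category.assoc, hw₀]; simp)
  refine ⟨cokernel.desc N.str (w₀ - d) (by rw [Preadditive.comp_sub, hd', sub_self]), ?_⟩
  rw [← cancel_epi (cokernel.π M.str), ← Category.assoc, pi_kopfMap, Category.assoc,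
    cokernel.π_desc, Preadditive.comp_sub, hd, hw₀, sub_zero]

lemma mono_hom_of_mono_kopf [PreservesFiniteLimits X] [PreservesFiniteColimits X]
    (hX : LocallyNilpotent X) {M N : XMod X} (hM : Mono M.str) (hN : Mono N.str) (g : M ⟶ N)
    (hg : Mono (kopfMap g)) : Mono g.hom := by
  have := additive_of_exact X
  let ι := kernel.ι g.hom
  have hι : ι ≫ g.hom = 0 := kernel.condition g.hom
  have h1 : ι ≫ cokernel.π M.str = 0 := by
    rw [← cancel_mono (kopfMap g), Category.assoc, pi_kopfMap, ← Category.assoc, hι]; simp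
  let l := Abelian.monoLift M.str ι h1
  have hl : l ≫ M.str = ι := Abelian.monoLift_comp M.str ι h1
  have h2 : l ≫ X.map g.hom = 0 := by
    rw [← cancel_mono N.str, Category.assoc, ← g.comm, ← Category.assoc, hl, hι, zero_comp]
  have hex : (ShortComplex.mk ι g.hom hι).Exact :=
    ShortComplex.exact_of_f_is_kernel _ (kernelIsKernel g.hom)
  have hex' := hex.map X
  have : Mono ((ShortComplex.mk ι g.hom hι).map X).f := by
    change Mono (X.map (kernel.ι g.hom)); infer_instance
  let m : kernel g.hom ⟶ X.obj (kernel g.hom) := hex'.lift l h2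
  have hm : m ≫ X.map ι = l := hex'.lift_f l h2
  have hmono : Mono m := by
    have h3 : m ≫ (X.map ι ≫ M.str) = ι := by rw [← Category.assoc, hm, hl]
    exact mono_of_mono_fac h3
  obtain ⟨n, hn⟩ := hX (kernel g.hom)
  have hz := isZero_of_mono_fpow n _ m hmono hn
  exact Preadditive.mono_of_kernel_zero (hz.eq_of_src _ _)

lemma exists_coker_str [PreservesFiniteLimits X] [PreservesFiniteColimits X]
    {M N : XMod X} (g : M ⟶ N) :
    ∃ p : X.obj (cokernel g.hom) ⟶ cokernel g.hom,
      N.str ≫ cokernel.π g.hom = X.map (cokernel.π g.hom) ≫ p := by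
  have := additive_of_exact X
  have hex : (ShortComplex.mk g.hom (cokernel.π g.hom) (cokernel.condition _)).Exact :=
    ShortComplex.exact_of_g_is_cokernel _ (cokernelIsCokernel g.hom)
  have hex' := hex.map X
  have : Epi ((ShortComplex.mk g.hom (cokernel.π g.hom) (cokernel.condition _)).map X).g := by
    change Epi (X.map (cokernel.π g.hom)); infer_instance
  have h0 : X.map g.hom ≫ N.str ≫ cokernel.π g.hom = 0 := by
    rw [← Category.assoc, ← g.comm, Category.assoc, cokernel.condition, comp_zero]
  exact ⟨hex'.desc _ h0, (hex'.g_desc _ h0).symm⟩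

lemma inflation_iff [EnoughInjectives C] [PreservesFiniteLimits X] [PreservesFiniteColimits X]
    (hX : LocallyNilpotent X) {M N : XMod X} (hM : Mono M.str) (hN : Mono N.str) (g : M ⟶ N) :
    IsInflationMono g ↔ Mono (kopfMap g) := by
  have := additive_of_exact X
  constructor
  · intro h
    have h1 := extProp_of_inflation g h
    obtain ⟨D, q, hD, hm, he, w, hex⟩ := h
    exact mono_kopf_of_ext g hm h1
  · intro hg
    have hm := mono_hom_of_mono_kopf hX hM hN g hg
    obtain ⟨p, hp⟩ := exists_coker_str g
    refine ⟨⟨cokernel g.hom, p⟩, ⟨cokernel.π g.hom, hp⟩, ?_, hm, ?_, cokernel.condition _,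
      ShortComplex.exact_of_g_is_cokernel _ (cokernelIsCokernel g.hom)⟩
    · apply mono_of_factor_injective
      intro E hE w
      let d₀ : N.carrier ⟶ E := Injective.factorThru (X.map (cokernel.π g.hom) ≫ w) N.str
      have hd₀ : N.str ≫ d₀ = X.map (cokernel.π g.hom) ≫ w := Injective.comp_factorThru _ _
      have h1 : M.str ≫ g.hom ≫ d₀ = 0 := by
        rw [← Category.assoc, g.comm, Category.assoc, hd₀, ← Category.assoc, ← X.map_comp,
          cokernel.condition, X.map_zero, zero_comp]
      let u : cokernel N.str ⟶ E :=
        Injective.factorThru (cokernel.desc M.str (g.hom ≫ d₀) h1) (kopfMap g)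
      have hu : kopfMap g ≫ u = cokernel.desc M.str (g.hom ≫ d₀) h1 :=
        Injective.comp_factorThru _ _
      have h2 : g.hom ≫ (d₀ - cokernel.π N.str ≫ u) = 0 := by
        rw [Preadditive.comp_sub, ← Category.assoc g.hom, ← pi_kopfMap, Category.assoc, hu,
          cokernel.π_desc, sub_self]
      refine ⟨cokernel.desc g.hom _ h2, ?_⟩
      dsimp only
      rw [← cancel_epi (X.map (cokernel.π g.hom)), ← Category.assoc, ← hp, Category.assoc,
        cokernel.π_desc, Preadditive.comp_sub, hd₀]
      simp
    · change Epi (cokernel.π g.hom); infer_instance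

lemma epi_hom_of_epi_kopf [PreservesFiniteLimits X] [PreservesFiniteColimits X]
    (hX : LocallyNilpotent X) {M N : XMod X} (g : M ⟶ N)
    (hg : Epi (kopfMap g)) : Epi g.hom := by
  obtain ⟨p, hp⟩ := exists_coker_str g
  have : Epi p := by
    apply Preadditive.epi_of_cancel_zero
    intro T t ht
    have h1 : N.str ≫ cokernel.π g.hom ≫ t = 0 := by
      rw [← Category.assoc, hp, Category.assoc, ht, comp_zero]
    have h2 : cokernel.desc N.str _ h1 = 0 := by
      rw [← cancel_epi (kopfMap g), ← cancel_epi (cokernel.π M.str), ← Category.assoc,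
        pi_kopfMap, Category.assoc, cokernel.π_desc]
      simp
    have h3 := cokernel.π_desc N.str _ h1
    rw [h2, comp_zero] at h3
    rw [← cancel_epi (cokernel.π g.hom), ← h3, comp_zero]
  obtain ⟨n, hn⟩ := hX (cokernel g.hom)
  have hz := isZero_of_epi_fpow n _ p this hn
  exact Preadditive.epi_of_cokernel_zero (hz.eq_of_tgt _ _)

lemma isIso_of_isIso_hom {M N : XMod X} (g : M ⟶ N) [IsIso g.hom] : IsIso g := by
  refine ⟨⟨⟨inv g.hom, ?_⟩, ?_, ?_⟩⟩
  · rw [← cancel_epi (X.map g.hom), ← Category.assoc, ← g.comm, ← Category.assoc,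
      ← X.map_comp]
    simp
  · apply XModHom.ext
    exact IsIso.hom_inv_id g.hom
  · apply XModHom.ext
    exact IsIso.inv_hom_id g.hom

lemma kopfMap_comp {M N P : XMod X} (f : M ⟶ N) (g : N ⟶ P) :
    kopfMap (f ≫ g) = kopfMap f ≫ kopfMap g := by
  rw [← cancel_epi (cokernel.π M.str), pi_kopfMap, ← Category.assoc, pi_kopfMap, Category.assoc,
    pi_kopfMap]
  simp

lemma kopfMap_id (M : XMod X) : kopfMap (𝟙 M) = 𝟙 _ := by
  rw [← cancel_epi (cokernel.π M.str), pi_kopfMap]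
  exact (Category.id_comp _).trans (Category.comp_id _).symm

/-- Lambek's lemma for the free module. -/
lemma lambek {F : XMod X} {I : C} (hF : IsFreeXModOn X F I) :
    IsIso (biprod.desc hF.unit F.str) := by
  let α := biprod.desc hF.unit F.str
  let Q : XMod X := ⟨I ⊞ X.obj F.carrier, X.map α ≫ biprod.inr⟩
  let a : Q ⟶ F := ⟨α, by simp [Q, α]⟩
  let b : F ⟶ Q := hF.lift Q biprod.inl
  have hb : hF.unit ≫ b.hom = biprod.inl := hF.fac Q biprod.inl
  have hba : b ≫ a = 𝟙 F := by
    rw [hF.uniq F hF.unit (b ≫ a) (by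
      rw [XMod.comp_hom, ← Category.assoc, hb]; simp [a, α])]
    exact (hF.uniq F hF.unit (𝟙 F) (Category.comp_id _)).symm
  have hba' : b.hom ≫ α = 𝟙 _ := congrArg XModHom.hom hba
  refine ⟨⟨b.hom, ?_, hba'⟩⟩
  apply biprod.hom_ext'
  · rw [biprod.inl_desc_assoc, hb]; exact (Category.comp_id _).symm
  · rw [biprod.inr_desc_assoc, b.comm]
    change X.map b.hom ≫ X.map α ≫ biprod.inr = _
    rw [← Category.assoc, ← X.map_comp, hba', X.map_id]
    exact (Category.id_comp _).trans (Category.comp_id _).symm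

lemma injective_of_iso_biprod [X.Additive]
    (hXinj : ∀ I : C, Injective I → Injective (X.obj I)) (n : ℕ) :
    ∀ (F I : C), Injective I → IsZero ((fpow X n).obj F) → (F ≅ I ⊞ X.obj F) → Injective F := by
  induction n with
  | zero => intro F I _ h _; exact IsZero.injective h
  | succ k ih =>
    intro F I hI h i
    have := hXinj I hI
    have := preservesBinaryBiproducts_of_preservesBiproducts X
    have := ih (X.obj F) (X.obj I) (hXinj I hI) (isZero_fpow_succ h)
      (X.mapIso i ≪≫ X.mapBiprod I (X.obj F))
    exact Injective.of_iso i.symm inferInstance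

lemma free_data [PreservesFiniteLimits X] (hX : LocallyNilpotent X)
    (hXinj : ∀ I : C, Injective I → Injective (X.obj I)) {F : XMod X} {I : C}
    (hI : Injective I) (hF : IsFreeXModOn X F I) :
    Injective F.carrier ∧ (∃ ρ : F.carrier ⟶ X.obj F.carrier, F.str ≫ ρ = 𝟙 _) ∧
      IsIso (hF.unit ≫ cokernel.π F.str) := by
  have := additive_of_exact X
  have hl := lambek hF
  let i := asIso (biprod.desc hF.unit F.str)
  have h1 : F.str ≫ i.inv = biprod.inr := by
    rw [Iso.comp_inv_eq]; simp [i]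
  have h2 : hF.unit ≫ i.inv = biprod.inl := by
    rw [Iso.comp_inv_eq]; simp [i]
  obtain ⟨n, hn⟩ := hX F.carrier
  refine ⟨injective_of_iso_biprod hXinj n _ _ hI hn i.symm, ⟨i.inv ≫ biprod.snd, ?_⟩, ?_⟩
  · rw [← Category.assoc, h1]; simp
  · have h3 : F.str ≫ i.inv ≫ biprod.fst = 0 := by rw [← Category.assoc, h1]; simp
    refine ⟨⟨cokernel.desc F.str (i.inv ≫ biprod.fst) h3, ?_, ?_⟩⟩
    · rw [Category.assoc, cokernel.π_desc, ← Category.assoc, h2]; simp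
    · rw [← cancel_epi (cokernel.π F.str), ← Category.assoc, cokernel.π_desc,
        ← cancel_epi i.hom]
      apply biprod.hom_ext'
      · simp [i]
      · simp [i]

lemma exists_section {F : XMod X} (ρ : F.carrier ⟶ X.obj F.carrier) (hρ : F.str ≫ ρ = 𝟙 _) :
    ∃ σ : cokernel F.str ⟶ F.carrier, cokernel.π F.str ≫ σ = 𝟙 _ - ρ ≫ F.str ∧
      σ ≫ cokernel.π F.str = 𝟙 _ := by
  have h : F.str ≫ (𝟙 _ - ρ ≫ F.str) = 0 := by
    rw [Preadditive.comp_sub, ← Category.assoc, hρ]; simp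
  refine ⟨cokernel.desc F.str _ h, cokernel.π_desc _ _ _, ?_⟩
  rw [← cancel_epi (cokernel.π F.str), ← Category.assoc, cokernel.π_desc]
  simp [Preadditive.sub_comp]

lemma exists_free [X.Additive] (n : ℕ) :
    ∀ J : C, IsZero ((fpow X n).obj J) → ∃ F : XMod X, Nonempty (IsFreeXModOn X F J) := by
  induction n with
  | zero =>
    intro J h
    have h : IsZero J := h
    refine ⟨⟨J, 0⟩, ⟨⟨𝟙 J, fun P _ => ⟨0, by simp⟩, ?_, ?_⟩⟩⟩
    · intro P g; exact h.eq_of_src _ _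
    · intro P g k _; apply XModHom.ext; exact h.eq_of_src _ _
  | succ k ih =>
    intro J h
    obtain ⟨F, ⟨hF⟩⟩ := ih (X.obj J) (isZero_fpow_succ h)
    let G : XMod X := ⟨J ⊞ F.carrier,
      (X.map biprod.fst ≫ hF.unit + X.map biprod.snd ≫ F.str) ≫ biprod.inr⟩
    have hl : X.map (biprod.inl : J ⟶ J ⊞ F.carrier) ≫ G.str = hF.unit ≫ biprod.inr := by
      simp only [G, Preadditive.add_comp, Preadditive.comp_add, Category.assoc]
      simp only [← Category.assoc, ← X.map_comp]
      simp
    have hr : X.map (biprod.inr : F.carrier ⟶ J ⊞ F.carrier) ≫ G.str = F.str ≫ biprod.inr := by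
      simp only [G, Preadditive.add_comp, Preadditive.comp_add, Category.assoc]
      simp only [← Category.assoc, ← X.map_comp]
      simp
    let inr' : F ⟶ G := ⟨biprod.inr, hr.symm⟩
    refine ⟨G, ⟨⟨biprod.inl, fun P g => ⟨biprod.desc g (hF.lift P (X.map g ≫ P.str)).hom, ?_⟩,
      ?_, ?_⟩⟩⟩
    · have h1 := hF.fac P (X.map g ≫ P.str)
      have h2 := (hF.lift P (X.map g ≫ P.str)).comm
      rw [biprod.desc_eq]
      simp only [G, Preadditive.add_comp, Preadditive.comp_add, Category.assoc,
        biprod.inr_fst_assoc, biprod.inr_snd_assoc, zero_comp, comp_zero, zero_add, h1, h2,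
        X.map_add, X.map_comp]
    · intro P g; exact biprod.inl_desc _ _
    · intro P g k hk
      apply XModHom.ext
      apply biprod.hom_ext'
      · rw [hk]; exact (biprod.inl_desc _ _).symm
      · have h1 := hF.uniq P (X.map g ≫ P.str) (inr' ≫ k) (by
          change hF.unit ≫ biprod.inr ≫ k.hom = _
          rw [← Category.assoc, ← hl, Category.assoc, k.comm, ← Category.assoc, ← X.map_comp, hk])
        have h2 : biprod.inr ≫ k.hom = (hF.lift P (X.map g ≫ P.str)).hom :=
          congrArg XModHom.hom h1
        rw [h2]; exact (biprod.inr_desc _ _).symm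

lemma part_one [EnoughInjectives C]
    [PreservesFiniteLimits X] [PreservesFiniteColimits X]
    (hX : LocallyNilpotent X)
    (hXinj : ∀ I : C, Injective I → Injective (X.obj I))
    (M F : XMod X) (I : C) (hI : Injective I) (hF : IsFreeXModOn X F I) (hM : Mono M.str)
    (g : M ⟶ F) :
        ((IsInflationMono g ∧ ∀ φ : F ⟶ F, g ≫ φ = g → IsIso φ) ↔
          (Mono (kopfMap g) ∧ Injective (cokernel F.str) ∧
            ∀ φ : cokernel F.str ⟶ cokernel F.str, kopfMap g ≫ φ = kopfMap g → IsIso φ)) := by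
  obtain ⟨hinj, ⟨ρ, hρ⟩, hiso⟩ := free_data hX hXinj hI hF
  have hFm : Mono F.str := mono_of_mono_fac hρ
  rw [inflation_iff hX hM hFm]
  refine and_congr_right fun hg => ?_
  have := additive_of_exact X
  constructor
  · intro hmin
    refine ⟨Injective.of_iso (asIso (hF.unit ≫ cokernel.π F.str)) hI, fun φ hφ => ?_⟩
    obtain ⟨σ, hσ, hσ'⟩ := exists_section ρ hρ
    have hgφ : g.hom ≫ cokernel.π F.str ≫ φ = g.hom ≫ cokernel.π F.str := by
      rw [← Category.assoc, ← pi_kopfMap, Category.assoc, hφ]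
    let e₀ : F.carrier ⟶ F.carrier := cokernel.π F.str ≫ φ ≫ σ + ρ ≫ F.str
    have hge : g.hom ≫ e₀ = g.hom := by
      have : g.hom ≫ cokernel.π F.str ≫ φ ≫ σ = g.hom ≫ (𝟙 _ - ρ ≫ F.str) := by
        rw [← hσ, ← Category.assoc (cokernel.π F.str), ← Category.assoc, hgφ, Category.assoc]
      simp only [e₀, Preadditive.comp_add, this]
      simp
    obtain ⟨e, he, he'⟩ := lemmaB hX hXinj F F g.hom
      (extProp_of_inflation g ((inflation_iff hX hM hFm g).2 hg)) hinj ρ hρ e₀ φ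
      (by simp [e₀, hσ']) (by
        rw [Preadditive.comp_sub, ← Category.assoc, ← g.comm, Category.assoc, hge,
          ← Category.assoc, ← X.map_comp, hge, g.comm, sub_self])
    have hi := hmin e (by apply XModHom.ext; exact he.trans hge)
    rw [← he']
    refine ⟨⟨kopfMap (inv e), ?_, ?_⟩⟩
    · rw [← kopfMap_comp, IsIso.hom_inv_id, kopfMap_id]
    · rw [← kopfMap_comp, IsIso.inv_hom_id, kopfMap_id]
  · rintro ⟨_, hmin⟩ φ hφ
    have hi := hmin (kopfMap φ) (by rw [← kopfMap_comp, hφ])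
    have h1 := mono_hom_of_mono_kopf hX hFm hFm φ inferInstance
    have h2 := epi_hom_of_epi_kopf hX φ inferInstance
    have : IsIso φ.hom := isIso_of_mono_of_epi _
    exact isIso_of_isIso_hom φ

lemma part_two [EnoughInjectives C]
    [PreservesFiniteLimits X] [PreservesFiniteColimits X]
    (hX : LocallyNilpotent X)
    (hXinj : ∀ I : C, Injective I → Injective (X.obj I))
    (henv : ∀ A : C, ∃ (I : C) (f : A ⟶ I), Mono f ∧ Injective I ∧
        ∀ φ : I ⟶ I, f ≫ φ = f → IsIso φ)
    (M : XMod X) (hM : Mono M.str) :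
        ∃ (J : C) (F : XMod X) (g : M ⟶ F), Injective J ∧
          Nonempty (IsFreeXModOn X F J) ∧ IsInflationMono g ∧
          ∀ φ : F ⟶ F, g ≫ φ = g → IsIso φ := by
  have := additive_of_exact X
  obtain ⟨J, j, hj, hJ, hmin⟩ := henv (cokernel M.str)
  obtain ⟨n, hn⟩ := hX J
  obtain ⟨F, ⟨hF⟩⟩ := exists_free n J hn
  obtain ⟨hinj, ⟨ρ, hρ⟩, hiso⟩ := free_data hX hXinj hJ hF
  obtain ⟨σ, hσ, hσ'⟩ := exists_section ρ hρ
  let θ := asIso (hF.unit ≫ cokernel.π F.str)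
  obtain ⟨g, _, hg⟩ := lemmaB hX hXinj M F _ (extProp_zero M) hinj ρ hρ
    (cokernel.π M.str ≫ (j ≫ θ.hom) ≫ σ) (j ≫ θ.hom) (by simp only [Category.assoc, hσ', Category.comp_id]) (by simp)
  refine ⟨J, F, g, hJ, ⟨hF⟩, ?_⟩
  rw [part_one hX hXinj M F J hJ hF hM g, hg]
  refine ⟨inferInstance, Injective.of_iso θ hJ, fun φ hφ => ?_⟩
  have h1 := hmin (θ.hom ≫ φ ≫ θ.inv) (by
    simp only [Category.assoc] at hφ
    rw [← cancel_mono θ.hom]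
    simpa only [Category.assoc, Iso.inv_hom_id, Category.comp_id] using hφ)
  have h2 : φ = θ.inv ≫ (θ.hom ≫ φ ≫ θ.inv) ≫ θ.hom := by simp
  rw [h2]; infer_instance

end Helpers

/-- Let `C` be abelian with enough injectives, `X` exact, locally
nilpotent and preserving injectives, and `g : M ⟶ f₁(I)` a morphism in `Mono(X)` with `I`
injective. Then `g` is an injective envelope in the exact category `Mono(X)` (a left
minimal inflation into an injective of `Mono(X)`) if and only if
`Kopf_X(g) : Kopf_X M ⟶ I` is an injective envelope in `C`. Consequently, if `C` has
injective envelopes, then so does `Mono(X)`. -/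
theorem injective_envelopes_in_monoX
    [EnoughInjectives C]
    [PreservesFiniteLimits X] [PreservesFiniteColimits X]
    (hX : LocallyNilpotent X)
    (hXinj : ∀ I : C, Injective I → Injective (X.obj I)) :
    (∀ (M F : XMod X) (I : C), Injective I → IsFreeXModOn X F I → Mono M.str →
      ∀ g : M ⟶ F,
        ((IsInflationMono g ∧ ∀ φ : F ⟶ F, g ≫ φ = g → IsIso φ) ↔
          (Mono (kopfMap g) ∧ Injective (cokernel F.str) ∧
            ∀ φ : cokernel F.str ⟶ cokernel F.str, kopfMap g ≫ φ = kopfMap g → IsIso φ))) ∧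
    ((∀ A : C, ∃ (I : C) (f : A ⟶ I), Mono f ∧ Injective I ∧
        ∀ φ : I ⟶ I, f ≫ φ = f → IsIso φ) →
      ∀ M : XMod X, Mono M.str →
        ∃ (J : C) (F : XMod X) (g : M ⟶ F), Injective J ∧
          Nonempty (IsFreeXModOn X F J) ∧ IsInflationMono g ∧
          ∀ φ : F ⟶ F, g ≫ φ = g → IsIso φ) := by
  exact ⟨fun M F I hI hF hM g => part_one hX hXinj M F I hI hF hM g,
    fun henv M hM => part_two hX hXinj henv M hM⟩
end
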